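/- arXiv:0807.3632 — 2 statements merged into one kernel-verified Lean document; each statement's English description precedes it below -/
import Mathlib

section
/- Let G = (V,E) be a finite connected undirected unweighted graph with m edges. For any two distinct vertices i and j, the commute time satisfies κ_{ij} = 2·m·R_{ij}, where R_{ij} is the effective resistance between i and j in the electrical network obtained by replacing every edge by a unit resistor. -/
open Finset

variable {V : Type*}

/-- The total weight incident to a vertex: `ω(i) = Σ_l ω(i,l)`. -/
noncomputable def vWeight [Fintype V] (w : V → V → ℝ) (i : V) : ℝ :=
  ∑ l, w i l

/-- The total weight of the graph (each edge counted once): `ω(G)`. -/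
noncomputable def gWeight [Fintype V] (w : V → V → ℝ) : ℝ :=
  (∑ i, ∑ l, w i l) / 2

/-- Transition probabilities of the random walk on the weighted graph:
from `i`, move to `l` with probability `ω(i,l)/ω(i)`. -/
noncomputable def walkStep [Fintype V] (w : V → V → ℝ) (i l : V) : ℝ :=
  w i l / vWeight w i

/-- `w` is a system of positive symmetric edge weights on a finite connected undirected
graph: symmetric, nonnegative, zero on the diagonal (and on non-edges), and the graph
whose edges are the pairs with positive weight is connected. -/
def IsWeight [Fintype V] (w : V → V → ℝ) : Prop :=
  (∀ a b, w a b = w b a) ∧ (∀ a b, 0 ≤ w a b) ∧ (∀ a, w a a = 0) ∧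
    (∀ a b, Relation.ReflTransGen (fun x y => 0 < w x y) a b)

/-- `hitSurv p j n i` is the probability that the Markov chain with transition kernel `p`
started at `i` has not visited `j` at any of the times `0, 1, …, n`. -/
noncomputable def hitSurv {S : Type*} [Fintype S] [DecidableEq S] (p : S → S → ℝ) (j : S) :
    ℕ → S → ℝ
  | 0 => fun i => if i = j then 0 else 1
  | n + 1 => fun i => if i = j then 0 else ∑ l, p i l * hitSurv p j n l

/-- Expected hitting time of `j` from `i`: the expected number of steps for the chain
started at `i` to first reach `j`, computed as `Σ_n P(T_j > n)`. -/
noncomputable def hitTime {S : Type*} [Fintype S] [DecidableEq S] (p : S → S → ℝ)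
    (i j : S) : ℝ :=
  ∑' n : ℕ, hitSurv p j n i

/-- A unit-current potential from `i` to `j`: Kirchhoff's equations when a unit current
enters at `i` and leaves at `j`. -/
def IsUnitPotential [Fintype V] (w : V → V → ℝ) (i j : V) (φ : V → ℝ) : Prop :=
  (∀ k, k ≠ i → k ≠ j → ∑ l, w k l * (φ k - φ l) = 0) ∧
    (∑ l, w i l * (φ i - φ l) = 1) ∧
    (∑ l, w j l * (φ j - φ l) = -1)

/-- `R` is the effective-resistance matrix of the weighted graph `w`:
`R a a = 0`, and for `a ≠ b`, `R a b = V_a - V_b` for a unit-current potential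
from `a` to `b`. -/
def IsResistance [Fintype V] (w : V → V → ℝ) (R : V → V → ℝ) : Prop :=
  (∀ a, R a a = 0) ∧
    ∀ a b, a ≠ b → ∃ φ, IsUnitPotential w a b φ ∧ R a b = φ a - φ b

/-- The weight function of an unweighted graph: weight `1` on edges, `0` elsewhere. -/
noncomputable def aw (G : SimpleGraph V) [DecidableRel G.Adj] (a b : V) : ℝ :=
  if G.Adj a b then 1 else 0

/-- Probability of a given trajectory: `trajProb p i xs` is the probability that the
chain started at `i` successively visits the vertices of the list `xs`. -/
noncomputable def trajProb {S : Type*} [Fintype S] (p : S → S → ℝ) : S → List S → ℝ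
  | _, [] => 1
  | i, x :: xs => p i x * trajProb p x xs

/-- Probability that the walk started at `i` has not visited every vertex by time `n`. -/
noncomputable def notCoveredProb [Fintype V] [DecidableEq V] (p : V → V → ℝ) (n : ℕ)
    (i : V) : ℝ :=
  ∑ xs : Fin n → V, trajProb p i (List.ofFn xs) *
    (if (i :: List.ofFn xs).toFinset = Finset.univ then 0 else 1)

/-- The cover time from `i`: the expected number of steps for the walk started at `i`
to have visited every vertex, computed as `Σ_n P(T_cov > n)`. -/
noncomputable def coverTime [Fintype V] [DecidableEq V] (p : V → V → ℝ) (i : V) : ℝ :=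
  ∑' n : ℕ, notCoveredProb p n i

/-- `visitSurv p j k n i` is the probability that the chain started at `i` is at `k` at
time `n` without having visited `j` at any of the times `0, …, n`. -/
noncomputable def visitSurv [Fintype V] [DecidableEq V] (p : V → V → ℝ) (j k : V) :
    ℕ → V → ℝ
  | 0 => fun i => if i = j then 0 else if i = k then 1 else 0
  | n + 1 => fun i => if i = j then 0 else ∑ l, p i l * visitSurv p j k n l

/-- `expVisits p i j k` is the expected number of visits to `k` (counting time `0`) of
the chain started at `i` strictly before its first visit to `j`. -/
noncomputable def expVisits [Fintype V] [DecidableEq V] (p : V → V → ℝ) (i j k : V) : ℝ :=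
  ∑' n : ℕ, visitSurv p j k n i

/-- `reachBeforeAux p i j n l` is the probability that the walk started at `l` reaches `j`
within `n` steps without visiting `i` first. -/
noncomputable def reachBeforeAux [Fintype V] [DecidableEq V] (p : V → V → ℝ) (i j : V) :
    ℕ → V → ℝ
  | 0 => fun l => if l = j then 1 else 0
  | n + 1 => fun l =>
      if l = j then 1 else if l = i then 0 else ∑ m, p l m * reachBeforeAux p i j n m

/-- The probability that the walk started at `i` reaches `j` before returning to `i`:
one step from `i` to `l`, then reach `j` before `i` (monotone limit in `n`). -/
noncomputable def escapeProb [Fintype V] [DecidableEq V] (p : V → V → ℝ) (i j : V) : ℝ :=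
  ∑ l, p i l * ⨆ n, reachBeforeAux p i j n l

/-- `hitSurvSet p F n x` is the probability that the chain started at `x` has not visited
the set `F` at any of the times `0, …, n`. -/
noncomputable def hitSurvSet {S : Type*} [Fintype S] (p : S → S → ℝ) (F : S → Prop)
    [DecidablePred F] : ℕ → S → ℝ
  | 0 => fun x => if F x then 0 else 1
  | n + 1 => fun x => if F x then 0 else ∑ y, p x y * hitSurvSet p F n y

/-- Expected hitting time of the set `F` from `x`, computed as `Σ_n P(T_F > n)`. -/
noncomputable def hitTimeSet {S : Type*} [Fintype S] (p : S → S → ℝ) (F : S → Prop)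
    [DecidablePred F] (x : S) : ℝ :=
  ∑' n : ℕ, hitSurvSet p F n x

/-- The associated chain `𝒢` on pairs `(P, i)` (visited set, current vertex): from
`(P, i)` it moves to `(P ∪ {j}, j)` with probability `ω(i,j)/ω(i)`. -/
noncomputable def pairStep [Fintype V] [DecidableEq V] (w : V → V → ℝ)
    (s t : Finset V × V) : ℝ :=
  if t.1 = insert t.2 s.1 then walkStep w s.2 t.2 else 0

/-- `exitProbAux p P j n i` is the probability that the walk started at `i` leaves `P`
within `n` steps and that the first vertex visited outside `P` is `j`. -/
noncomputable def exitProbAux [Fintype V] [DecidableEq V] (p : V → V → ℝ) (P : Finset V)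
    (j : V) : ℕ → V → ℝ
  | 0 => fun i => if i ∈ P then 0 else if i = j then 1 else 0
  | n + 1 => fun i =>
      if i ∈ P then ∑ l, p i l * exitProbAux p P j n l else if i = j then 1 else 0

/-- The probability that the first vertex outside `P` visited by the walk started at `i`
is `j` (monotone limit in the number of allowed steps). -/
noncomputable def exitProb [Fintype V] [DecidableEq V] (p : V → V → ℝ) (P : Finset V)
    (i j : V) : ℝ :=
  ⨆ n, exitProbAux p P j n i

/-- The negated weighted Laplacian `Δ` of the weighted graph `w` on `Fin n`. -/
noncomputable def negLaplacian (n : ℕ) (w : Fin n → Fin n → ℝ) :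
    Matrix (Fin n) (Fin n) ℝ :=
  Matrix.of fun k l => if k = l then -(∑ m, w k m) else w k l

/-- `Δ₂`: the negated weighted Laplacian with its first row replaced by the first row of
the identity matrix. -/
noncomputable def delta2 (n : ℕ) (hn : 0 < n) (w : Fin n → Fin n → ℝ) :
    Matrix (Fin n) (Fin n) ℝ :=
  (negLaplacian n w).updateRow ⟨0, hn⟩ (fun l => if l = ⟨0, hn⟩ then 1 else 0)

/-- The weight function obtained from `w` by adding weight `u` on the edge `{a, b}`. -/
noncomputable def addEdge [DecidableEq V] (w : V → V → ℝ) (a b : V) (u : ℝ)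
    (x y : V) : ℝ :=
  w x y + (if (x = a ∧ y = b) ∨ (x = b ∧ y = a) then u else 0)

section HittingTime

variable {S : Type*} [Fintype S] [DecidableEq S] {p : S → S → ℝ} {j : S}

lemma hitSurv_self (p : S → S → ℝ) (j : S) (n : ℕ) : hitSurv p j n j = 0 := by
  cases n <;> simp [hitSurv]

lemma hitTime_self (p : S → S → ℝ) (j : S) : hitTime p j j = 0 := by
  simp [hitTime, hitSurv_self]

lemma hitSurv_nonneg (hp : ∀ a b, 0 ≤ p a b) (n : ℕ) (k : S) : 0 ≤ hitSurv p j n k := by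
  induction n generalizing k with
  | zero => simp only [hitSurv]; split_ifs <;> norm_num
  | succ n ih =>
    simp only [hitSurv]
    split_ifs
    · exact le_rfl
    · exact sum_nonneg fun l _ => mul_nonneg (hp k l) (ih l)

lemma sum_range_succ_hitSurv {k : S} (hk : k ≠ j) (N : ℕ) :
    ∑ n ∈ range (N + 1), hitSurv p j n k =
      1 + ∑ l, p k l * ∑ n ∈ range N, hitSurv p j n l := by
  rw [sum_range_succ', add_comm]
  simp only [hitSurv, if_neg hk, mul_sum]
  rw [sum_comm]

/-- A nonnegative function `f` with `f ≥ 1 + p f` away from `j` dominates the truncated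
expected hitting times of `j`. -/
lemma sum_range_hitSurv_le (hp : ∀ a b, 0 ≤ p a b) {f : S → ℝ} (hf : ∀ k, 0 ≤ f k)
    (hpf : ∀ k, k ≠ j → 1 + ∑ l, p k l * f l ≤ f k) (N : ℕ) (k : S) :
    ∑ n ∈ range N, hitSurv p j n k ≤ f k := by
  induction N generalizing k with
  | zero => simpa using hf k
  | succ N ih =>
    by_cases hk : k = j
    · subst hk
      simpa [hitSurv_self] using hf k
    · rw [sum_range_succ_hitSurv hk]
      refine le_trans ?_ (hpf k hk)
      gcongr with l
      · exact hp k l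
      · exact ih l

lemma summable_hitSurv (hp : ∀ a b, 0 ≤ p a b) {f : S → ℝ} (hf : ∀ k, 0 ≤ f k)
    (hpf : ∀ k, k ≠ j → 1 + ∑ l, p k l * f l ≤ f k) (k : S) :
    Summable fun n => hitSurv p j n k :=
  summable_of_sum_range_le (fun n => hitSurv_nonneg hp n k)
    fun N => sum_range_hitSurv_le hp hf hpf N k

lemma hitTime_eq_one_add (hs : ∀ k, Summable fun n => hitSurv p j n k) {k : S} (hk : k ≠ j) :
    hitTime p k j = 1 + ∑ l, p k l * hitTime p l j := by
  simp only [hitTime]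
  rw [(hs k).tsum_eq_zero_add]
  simp only [hitSurv, if_neg hk]
  rw [Summable.tsum_finsetSum fun l _ => (hs l).mul_left _]
  simp only [tsum_mul_left]

end HittingTime

section Laplacian

variable [Fintype V] {w : V → V → ℝ}

lemma sum_mul_laplacian_comm (hw : ∀ a b, w a b = w b a) (f g : V → ℝ) :
    ∑ k, f k * ∑ l, w k l * (g k - g l) = ∑ k, g k * ∑ l, w k l * (f k - f l) := by
  have key : ∑ k, ∑ l, f k * (w k l * g l) = ∑ k, ∑ l, g k * (w k l * f l) := by
    rw [sum_comm]
    refine sum_congr rfl fun k _ => sum_congr rfl fun l _ => ?_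
    rw [hw]
    ring
  simp only [mul_sum, mul_sub, sum_sub_distrib, key]
  congr 1
  exact sum_congr rfl fun k _ => sum_congr rfl fun l _ => by ring

lemma sum_laplacian_eq_zero (hw : ∀ a b, w a b = w b a) (g : V → ℝ) :
    ∑ k, ∑ l, w k l * (g k - g l) = 0 := by
  simpa using sum_mul_laplacian_comm hw (fun _ => 1) g

lemma IsUnitPotential.laplacian_eq [DecidableEq V] {i j : V} (hij : i ≠ j) {φ : V → ℝ}
    (hφ : IsUnitPotential w i j φ) (k : V) :
    ∑ l, w k l * (φ k - φ l) = (if k = i then 1 else 0) - (if k = j then 1 else 0) := by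
  obtain ⟨h₀, hi, hj⟩ := hφ
  by_cases hki : k = i
  · subst hki
    simp [hi, hij]
  · by_cases hkj : k = j
    · subst hkj
      simp [hj, hki]
    · simp [h₀ k hki hkj, hki, hkj]

/-- The Laplacian of `k ↦ h_{kj}` is the vertex weight, minus the total weight at `j`. -/
lemma laplacian_hitTime [DecidableEq V] (hw : ∀ a b, w a b = w b a) {j : V}
    (hpos : ∀ k, k ≠ j → vWeight w k ≠ 0)
    (hs : ∀ k, Summable fun n => hitSurv (walkStep w) j n k) (k : V) :
    ∑ l, w k l * (hitTime (walkStep w) k j - hitTime (walkStep w) l j) =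
      vWeight w k - if k = j then ∑ a, vWeight w a else 0 := by
  have off : ∀ k, k ≠ j →
      ∑ l, w k l * (hitTime (walkStep w) k j - hitTime (walkStep w) l j) = vWeight w k := by
    intro k hk
    have hstep := hitTime_eq_one_add hs hk
    have hsum : ∑ l, walkStep w k l * hitTime (walkStep w) l j =
        (∑ l, w k l * hitTime (walkStep w) l j) / vWeight w k := by
      rw [sum_div]
      exact sum_congr rfl fun l _ => by rw [walkStep]; ring
    rw [hsum] at hstep
    have hk0 := hpos k hk
    simp only [mul_sub, sum_sub_distrib, ← sum_mul]
    change vWeight w k * _ - _ = _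
    rw [hstep]
    field_simp
    ring
  by_cases hk : k = j
  · subst hk
    have h0 := sum_laplacian_eq_zero hw fun l => hitTime (walkStep w) l k
    rw [← add_sum_erase _ _ (mem_univ k),
      sum_congr rfl fun a ha => off a (ne_of_mem_erase ha)] at h0
    rw [if_pos rfl, ← add_sum_erase univ (vWeight w) (mem_univ k)]
    linarith
  · rw [off k hk, if_neg hk, sub_zero]

end Laplacian

section Unweighted

lemma SimpleGraph.Connected.exists_adj_dist_eq {G : SimpleGraph V} (hG : G.Connected) {k j : V}
    (hk : k ≠ j) :
    ∃ a, G.Adj k a ∧ G.dist k j = G.dist a j + 1 := by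
  obtain ⟨q, hq⟩ := hG.exists_walk_length_eq_dist k j
  cases q with
  | nil => exact absurd rfl hk
  | @cons _ a _ hadj q =>
    refine ⟨a, hadj, le_antisymm ?_ ?_⟩
    · have := hG.dist_triangle (u := k) (v := a) (w := j)
      rw [SimpleGraph.dist_eq_one_iff_adj.mpr hadj] at this
      omega
    · rw [← hq, SimpleGraph.Walk.length_cons]
      have := SimpleGraph.dist_le q
      omega

variable (G : SimpleGraph V) [DecidableRel G.Adj]

lemma aw_symm (a b : V) : aw G a b = aw G b a := by
  simp [aw, G.adj_comm]

lemma aw_nonneg (a b : V) : 0 ≤ aw G a b := by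
  rw [aw]; split_ifs <;> norm_num

variable [Fintype V]

lemma vWeight_aw (k : V) : vWeight (aw G) k = G.degree k := by
  simp [vWeight, aw, ← G.card_neighborFinset_eq_degree, G.neighborFinset_eq_filter]

lemma sum_vWeight_aw [DecidableEq V] : ∑ k, vWeight (aw G) k = 2 * (G.edgeFinset.card : ℝ) := by
  simp only [vWeight_aw]
  exact_mod_cast G.sum_degrees_eq_twice_card_edges

lemma walkStep_aw_nonneg (a b : V) : 0 ≤ walkStep (aw G) a b :=
  div_nonneg (aw_nonneg G a b) (sum_nonneg fun l _ => aw_nonneg G a l)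

variable {G}

lemma vWeight_aw_pos (hG : G.Connected) {k j : V} (hk : k ≠ j) : 0 < vWeight (aw G) k := by
  obtain ⟨a, hadj, -⟩ := hG.exists_adj_dist_eq hk
  rw [vWeight_aw, Nat.cast_pos, G.degree_pos_iff_exists_adj]
  exact ⟨a, hadj⟩

/-- With `n` the number of vertices, `f k = M * (1 - (2 * n)⁻¹ ^ d(k, j))` satisfies
`f ≥ 1 + p f` away from `j` once `M` is large. -/
lemma exists_hitting_supersolution (hG : G.Connected) (j : V) :
    ∃ f : V → ℝ, (∀ k, 0 ≤ f k) ∧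
      ∀ k, k ≠ j → 1 + ∑ l, walkStep (aw G) k l * f l ≤ f k := by
  have : Nonempty V := ⟨j⟩
  set n : ℝ := (Fintype.card V : ℝ) with hn
  have hn1 : 1 ≤ n := by
    rw [hn]
    exact_mod_cast Fintype.card_pos
  set c : ℝ := 2 * n with hc
  have hc0 : 0 < c := by linarith
  set M : ℝ := ∑ k, c ^ G.dist k j with hM
  have hM0 : 0 ≤ M := sum_nonneg fun k _ => by positivity
  have hMk : ∀ k, 1 ≤ M * c⁻¹ ^ G.dist k j := fun k => by
    rw [inv_pow, ← div_eq_mul_inv, one_le_div (by positivity)]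
    exact single_le_sum (f := fun k => c ^ G.dist k j) (fun a _ => by positivity) (mem_univ k)
  refine ⟨fun k => M * (1 - c⁻¹ ^ G.dist k j), fun k => mul_nonneg hM0 (sub_nonneg.mpr ?_), ?_⟩
  · exact pow_le_one₀ (by positivity) (inv_le_one_of_one_le₀ (by linarith))
  intro k hk
  obtain ⟨a, hadj, hdist⟩ := hG.exists_adj_dist_eq hk
  have hpos := vWeight_aw_pos hG hk
  have hle : vWeight (aw G) k ≤ n := by
    rw [vWeight_aw, hn]
    exact_mod_cast (G.degree_lt_card_verts k).le
  have hrow : ∑ l, walkStep (aw G) k l = 1 := by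
    simp only [walkStep, ← sum_div]
    exact div_self hpos.ne'
  have hstep : n⁻¹ ≤ walkStep (aw G) k a := by
    rw [walkStep, aw, if_pos hadj, one_div]
    exact inv_anti₀ hpos hle
  have hsum : n⁻¹ * c⁻¹ ^ G.dist a j ≤ ∑ l, walkStep (aw G) k l * c⁻¹ ^ G.dist l j :=
    (mul_le_mul_of_nonneg_right hstep (by positivity)).trans
      (single_le_sum (f := fun l => walkStep (aw G) k l * c⁻¹ ^ G.dist l j)
        (fun l _ => mul_nonneg (walkStep_aw_nonneg G k l) (by positivity)) (mem_univ a))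
  have hdecay : n⁻¹ * c⁻¹ ^ G.dist a j = 2 * c⁻¹ ^ G.dist k j := by
    rw [hdist, pow_succ, hc, mul_inv]
    ring
  have hexpand : ∑ l, walkStep (aw G) k l * (M * (1 - c⁻¹ ^ G.dist l j)) =
      M * (1 - ∑ l, walkStep (aw G) k l * c⁻¹ ^ G.dist l j) := by
    rw [← hrow, ← sum_sub_distrib, mul_sum]
    refine sum_congr rfl fun l _ => ?_
    rw [hrow]
    ring
  rw [hexpand]
  have := mul_le_mul_of_nonneg_left (hdecay ▸ hsum) hM0
  linarith [hMk k]

lemma summable_hitSurv_aw [DecidableEq V] (hG : G.Connected) (j k : V) :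
    Summable fun n => hitSurv (walkStep (aw G)) j n k := by
  obtain ⟨f, hf, hpf⟩ := exists_hitting_supersolution hG j
  exact summable_hitSurv (walkStep_aw_nonneg G) hf hpf k

end Unweighted

/-- On an unweighted connected graph with `m` edges,
`κ_{ij} = 2·m·R_{ij}` for distinct vertices `i, j`. -/
theorem commute_time_resistance_unweighted
    {V : Type*} [Fintype V] [DecidableEq V] (G : SimpleGraph V) [DecidableRel G.Adj]
    (hG : G.Connected) (i j : V) (hij : i ≠ j)
    (φ : V → ℝ) (hφ : IsUnitPotential (aw G) i j φ) :
    hitTime (walkStep (aw G)) i j + hitTime (walkStep (aw G)) j i =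
      2 * (G.edgeFinset.card : ℝ) * (φ i - φ j) := by
  have lap : ∀ b k, ∑ l, aw G k l *
      (hitTime (walkStep (aw G)) k b - hitTime (walkStep (aw G)) l b) =
        vWeight (aw G) k - if k = b then ∑ a, vWeight (aw G) a else 0 := fun b =>
    laplacian_hitTime (aw_symm G) (fun _ hk => (vWeight_aw_pos hG hk).ne')
      (summable_hitSurv_aw hG b)
  have hi := sum_mul_laplacian_comm (aw_symm G) φ fun k => hitTime (walkStep (aw G)) k i
  have hj := sum_mul_laplacian_comm (aw_symm G) φ fun k => hitTime (walkStep (aw G)) k j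
  simp only [lap, hφ.laplacian_eq hij] at hi hj
  simp only [mul_sub, sum_sub_distrib, mul_ite, mul_one, mul_zero,
    sum_ite_eq', mem_univ, if_true, hitTime_self, sum_vWeight_aw] at hi hj
  linarith
end

section
/- Let G = (V,E) be a finite connected undirected graph with positive symmetric edge weights ω, let i ≠ j be vertices, and let U_k^{ij} denote the expected number of visits to vertex k (counting the visit at time 0) made by the random walk started at i before it first reaches j. Let V be the unit-current potential from i to j normalized so that V_j = 0. Then for every vertex k, V_k = U_k^{ij}/ω(k). -/
open Finset

variable {V : Type*}

section

variable [Fintype V] [DecidableEq V]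

theorem visitSurv_self (p : V → V → ℝ) (j k : V) (n : ℕ) : visitSurv p j k n j = 0 := by
  cases n <;> simp [visitSurv]

theorem visitSurv_nonneg {p : V → V → ℝ} (hp : ∀ a b, 0 ≤ p a b) (j k : V) (n : ℕ) (a : V) :
    0 ≤ visitSurv p j k n a := by
  induction n generalizing a with
  | zero => simp only [visitSurv]; split_ifs <;> norm_num
  | succ n ih =>
    simp only [visitSurv]
    split_ifs
    · exact le_rfl
    · exact Finset.sum_nonneg fun l _ => mul_nonneg (hp a l) (ih l)

/-- Decomposition of `visitSurv` according to the last step of the walk. -/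
theorem visitSurv_succ_last (p : V → V → ℝ) (j k : V) (n : ℕ) (a : V) :
    visitSurv p j k (n + 1) a = if k = j then 0 else ∑ l, visitSurv p j l n a * p l k := by
  induction n generalizing a with
  | zero =>
    by_cases ha : a = j
    · subst ha; simp [visitSurv]
    · by_cases hk : k = j
      · subst hk
        simp only [visitSurv, if_neg ha, if_true]
        refine Finset.sum_eq_zero fun l _ => ?_
        split_ifs <;> simp
      · simp only [visitSurv, if_neg ha, if_neg hk, ite_mul, one_mul, zero_mul,
          Finset.sum_ite_eq, Finset.mem_univ, if_true]
        rw [Finset.sum_eq_single k]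
        · simp [hk]
        · intro b _ hb; simp [hb]
        · simp
  | succ n ih =>
    by_cases ha : a = j
    · subst ha; simp [visitSurv_self]
    · rw [visitSurv]
      simp only [if_neg ha, ih]
      by_cases hk : k = j
      · simp [hk]
      · simp only [if_neg hk, visitSurv, if_neg ha, Finset.mul_sum, Finset.sum_mul]
        rw [Finset.sum_comm]
        exact Finset.sum_congr rfl fun _ _ => Finset.sum_congr rfl fun _ _ => by ring

/-- Reversibility of the walk killed at `j`. -/
theorem vWeight_mul_visitSurv {w : V → V → ℝ} (hsymm : ∀ a b, w a b = w b a)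
    (hpos : ∀ a, 0 < vWeight w a) (j k : V) (n : ℕ) (a : V) :
    vWeight w a * visitSurv (walkStep w) j k n a =
      vWeight w k * visitSurv (walkStep w) j a n k := by
  induction n generalizing a with
  | zero =>
    by_cases hak : a = k
    · subst hak; rfl
    · simp [visitSurv, hak, Ne.symm hak]
  | succ n ih =>
    rw [visitSurv_succ_last _ _ a]
    simp only [visitSurv]
    split_ifs
    · simp
    · rw [Finset.mul_sum, Finset.mul_sum]
      refine Finset.sum_congr rfl fun l _ => ?_
      have hl := (hpos l).ne'
      have ha := (hpos a).ne'
      calc vWeight w a * (walkStep w a l * visitSurv (walkStep w) j k n l)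
          = w a l * visitSurv (walkStep w) j k n l := by
            rw [walkStep]; field_simp
        _ = (vWeight w l * visitSurv (walkStep w) j k n l) * walkStep w l a := by
            rw [walkStep, hsymm a l]; field_simp
        _ = vWeight w k * (visitSurv (walkStep w) j l n k * walkStep w l a) := by
            rw [ih]; ring

end

theorem IsWeight.vWeight_pos [Fintype V] [Nontrivial V] {w : V → V → ℝ} (hw : IsWeight w)
    (a : V) : 0 < vWeight w a := by
  obtain ⟨b, hb⟩ := exists_ne a
  rcases (hw.2.2.2 a b).cases_head with h | ⟨c, hc, -⟩
  · exact absurd h.symm hb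
  · exact Finset.sum_pos' (fun l _ => hw.2.1 a l) ⟨c, Finset.mem_univ c, hc⟩

/-- Minimum principle: a function that is superharmonic off `j` and nonnegative at `j` is
nonnegative. -/
theorem IsWeight.nonneg_of_superharmonic [Fintype V] {w : V → V → ℝ} (hw : IsWeight w)
    {j : V} {f : V → ℝ} (hj : 0 ≤ f j)
    (hf : ∀ a, a ≠ j → 0 ≤ ∑ l, w a l * (f a - f l)) (a : V) : 0 ≤ f a := by
  have : Nonempty V := ⟨j⟩
  obtain ⟨m, hm⟩ := Finite.exists_min f
  refine le_trans ?_ (hm a)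
  by_contra! hneg
  have key : ∀ b, Relation.ReflTransGen (fun x y => 0 < w x y) m b → f b = f m := by
    intro b hb
    induction hb with
    | refl => rfl
    | @tail b c _ hbc ih =>
      have hbj : b ≠ j := by rintro rfl; linarith
      have hterm : ∀ l ∈ Finset.univ, w b l * (f b - f l) ≤ 0 := fun l _ =>
        mul_nonpos_of_nonneg_of_nonpos (hw.2.1 b l) (by rw [ih]; linarith [hm l])
      have hzero := (Finset.sum_eq_zero_iff_of_nonpos hterm).1
        (le_antisymm (Finset.sum_nonpos hterm) (hf b hbj)) c (Finset.mem_univ c)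
      rcases mul_eq_zero.1 hzero with h | h
      · exact absurd h hbc.ne'
      · linarith
  linarith [key j (hw.2.2.2 m j)]

/-- The net current out of `a` in terms of the one-step average of the potential. -/
theorem sum_mul_sub_eq_vWeight_mul [Fintype V] {w : V → V → ℝ} {a : V}
    (ha : vWeight w a ≠ 0) (f : V → ℝ) :
    ∑ l, w a l * (f a - f l) = vWeight w a * (f a - ∑ l, walkStep w a l * f l) := by
  simp only [mul_sub, Finset.sum_sub_distrib, ← Finset.sum_mul, Finset.mul_sum, walkStep]
  congr 1
  refine Finset.sum_congr rfl fun l _ => ?_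
  field_simp

/-- The Green function of the walk killed at `j` is the nonnegative solution of the Poisson
equation with source at `i`. -/
theorem IsWeight.hasSum_visitSurv [Fintype V] [DecidableEq V] {w : V → V → ℝ}
    (hw : IsWeight w) (hpos : ∀ a, 0 < vWeight w a) {i j : V} {f : V → ℝ} (hj : f j = 0)
    (hf : ∀ a, a ≠ j → f a = (if a = i then 1 else 0) + ∑ l, walkStep w a l * f l) (a : V) :
    HasSum (fun n => visitSurv (walkStep w) j i n a) (f a) := by
  have hp : ∀ a b, 0 ≤ walkStep w a b := fun a b => div_nonneg (hw.2.1 a b) (hpos a).le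
  have hnn := visitSurv_nonneg hp j i
  have hsuper : ∀ g : V → ℝ, 0 ≤ g j → (∀ a, a ≠ j → ∑ l, walkStep w a l * g l ≤ g a) →
      ∀ a, 0 ≤ g a := fun g hgj hg => hw.nonneg_of_superharmonic hgj fun a ha => by
    rw [sum_mul_sub_eq_vWeight_mul (hpos a).ne']
    exact mul_nonneg (hpos a).le (sub_nonneg.2 (hg a ha))
  have hrec : ∀ N a, a ≠ j → ∑ n ∈ Finset.range (N + 1), visitSurv (walkStep w) j i n a =
      (if a = i then 1 else 0) +
        ∑ l, walkStep w a l * ∑ n ∈ Finset.range N, visitSurv (walkStep w) j i n l := by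
    intro N a ha
    rw [Finset.sum_range_succ']
    simp only [visitSurv, if_neg ha, Finset.mul_sum]
    rw [Finset.sum_comm, add_comm]
  have hf0 : ∀ a, 0 ≤ f a := hsuper f hj.ge fun a ha => by
    rw [hf a ha]; split_ifs <;> simp
  have hbound : ∀ N a, ∑ n ∈ Finset.range N, visitSurv (walkStep w) j i n a ≤ f a := by
    intro N
    induction N with
    | zero => simpa using hf0
    | succ N ih =>
      intro a
      by_cases ha : a = j
      · subst ha; simp [visitSurv_self, hj]
      · rw [hrec N a ha, hf a ha]
        gcongr with l
        · exact hp a l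
        · exact ih l
  have hsum : ∀ a, Summable fun n => visitSurv (walkStep w) j i n a := fun a =>
    summable_of_sum_range_le (fun n => hnn n a) fun N => hbound N a
  set g : V → ℝ := fun a => ∑' n, visitSurv (walkStep w) j i n a with hg
  have hgj : g j = 0 := by simp [hg, visitSurv_self]
  have hgrec : ∀ a, a ≠ j → g a = (if a = i then 1 else 0) + ∑ l, walkStep w a l * g l := by
    intro a ha
    simp only [hg]
    rw [(hsum a).tsum_eq_zero_add]
    simp only [visitSurv, if_neg ha]
    rw [Summable.tsum_finsetSum fun l _ => (hsum l).mul_left _]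
    simp only [tsum_mul_left]
  have hle : 0 ≤ g a - f a := hsuper (fun a => g a - f a) (by simp [hgj, hj]) (fun a ha => by
    simp only [mul_sub, Finset.sum_sub_distrib]
    linarith [hgrec a ha, hf a ha]) a
  have hge : g a ≤ f a := (hsum a).tsum_le_of_sum_range_le fun N => hbound N a
  have heq : g a = f a := by linarith
  exact heq ▸ (hsum a).hasSum

/-- The unit-current potential normalized by `V_j = 0` satisfies
`V_k = U_k^{ij}/ω(k)`, where `U_k^{ij}` is the expected number of visits to `k`
before first reaching `j`, for the walk started at `i`. -/
theorem potential_eq_normalized_visits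
    {V : Type*} [Fintype V] [DecidableEq V] (w : V → V → ℝ) (hw : IsWeight w)
    (i j : V) (hij : i ≠ j) (φ : V → ℝ) (hφ : IsUnitPotential w i j φ)
    (hφj : φ j = 0) (k : V) :
    φ k = expVisits (walkStep w) i j k / vWeight w k := by
  have : Nontrivial V := ⟨i, j, hij⟩
  have hpos := hw.vWeight_pos
  have hi := (hpos i).ne'
  have hsum : HasSum (fun n => visitSurv (walkStep w) j i n k) (vWeight w i * φ k) := by
    refine hw.hasSum_visitSurv (f := fun a => vWeight w i * φ a) hpos (by simp [hφj])
      (fun a ha => ?_) k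
    have hcur := sum_mul_sub_eq_vWeight_mul (hpos a).ne' φ
    simp only [mul_left_comm _ (vWeight w i), ← Finset.mul_sum]
    by_cases hai : a = i
    · subst hai
      rw [hφ.2.1] at hcur
      rw [if_pos rfl]
      linarith
    · rw [hφ.1 a hai ha] at hcur
      have h := (mul_eq_zero.1 hcur.symm).resolve_left (hpos a).ne'
      rw [if_neg hai, zero_add, sub_eq_zero.1 h]
  have hrev : ∀ n, visitSurv (walkStep w) j k n i =
      vWeight w k / vWeight w i * visitSurv (walkStep w) j i n k := by
    intro n
    have h := vWeight_mul_visitSurv hw.1 hpos j k n i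
    field_simp
    linarith
  have hk := (hpos k).ne'
  rw [expVisits, tsum_congr hrev, tsum_mul_left, hsum.tsum_eq]
  field_simp
end
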